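/- There exists a universal constant C > 0 such that for all integers n1, n2 > 1 with n = n1·n2, all σ > 0, and every θ* ∈ M, the risk of the isotonic least squares estimator satisfies R(θ*, θ̂) ≤ C ( σ²·(log n)⁸ / n + sqrt( σ² V(θ*) / n ) · (log n)⁴ ). -/

import Mathlib

open MeasureTheory ProbabilityTheory

noncomputable section

/-- The set of isotonic (coordinatewise nondecreasing) `n1 × n2` matrices. -/
def Isotonic {n1 n2 : ℕ} (θ : Fin n1 → Fin n2 → ℝ) : Prop :=
  ∀ ⦃i k : Fin n1⦄ ⦃j l : Fin n2⦄, i ≤ k → j ≤ l → θ i j ≤ θ k l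

/-- Squared Frobenius norm of a matrix. -/
def frobSq {n1 n2 : ℕ} (θ : Fin n1 → Fin n2 → ℝ) : ℝ :=
  ∑ i, ∑ j, θ i j ^ 2

/-- The law of an `n1 × n2` matrix with i.i.d. `N(0, σ²)` entries. -/
def noiseMeasure (n1 n2 : ℕ) (σ : ℝ) : Measure (Fin n1 → Fin n2 → ℝ) :=
  Measure.pi fun _ => Measure.pi fun _ => gaussianReal 0 ⟨σ ^ 2, sq_nonneg σ⟩

/-- `lse` is the least squares estimator: for every data matrix `y`, `lse y` minimizes
the squared Frobenius distance to `y` over the cone of isotonic matrices. -/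
def IsLSE {n1 n2 : ℕ} (lse : (Fin n1 → Fin n2 → ℝ) → Fin n1 → Fin n2 → ℝ) : Prop :=
  ∀ y, Isotonic (lse y) ∧ ∀ θ, Isotonic θ → frobSq (y - lse y) ≤ frobSq (y - θ)

/-- The risk `R(θ*, est) = E ‖est(θ* + ε) − θ*‖² / n`, where `ε` has i.i.d. `N(0,σ²)`
entries and `n = n1 n2`. -/
def risk {n1 n2 : ℕ} (σ : ℝ) (θstar : Fin n1 → Fin n2 → ℝ)
    (est : (Fin n1 → Fin n2 → ℝ) → Fin n1 → Fin n2 → ℝ) : ℝ :=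
  (∫ ε, frobSq (est (θstar + ε) - θstar) ∂noiseMeasure n1 n2 σ) / (n1 * n2)

/-- The variance `V(θ) = (1/n) Σ_{i,j} (θ_{ij} − θ̄)²` of the entries of `θ`. -/
def matVar {n1 n2 : ℕ} (θ : Fin n1 → Fin n2 → ℝ) : ℝ :=
  (∑ i, ∑ j, (θ i j - (∑ i, ∑ j, θ i j) / (n1 * n2)) ^ 2) / (n1 * n2)

/-!
Comparing the fit at `θ̂` with the fit at `θ*` gives, for every constant `c`,
`‖θ̂ - θ*‖² ≤ 2 ⟨ε, θ̂ - c⟩ - 2 ⟨ε, θ* - c⟩`, and both matrices paired with the noise are isotonic.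
It therefore suffices to bound `⟨ε, u⟩` for isotonic `u` by `‖u‖` times a polylogarithmic factor
times the *rectangle discrepancy* of `ε`, the largest `|∑_A ε| / √|A|` over rectangles `A`.

Splitting into positive and negative parts and reversing the axes, take `u` nonnegative and
antitone. At `(i, j)` it is at most `‖u‖ / √((i + 1) (j + 1))`. Cut the index set into products of
dyadic shells; on each of them coarsen `u` to dyadic blocks, one level of refinement at a time. The
refinement increments of a bounded monotone function telescope, so each level costs no more than the
coarsest block does, and there are logarithmically many levels and shells.

Finally `(∑_A ε)² / |A|` is the square of an `N(0, σ²)` variable and there are at most `n²`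
rectangles, so summing exponential moments bounds the mean of the squared discrepancy by
`4 σ² log (2 n²)`.
-/

section Gaussian

open scoped NNReal

variable {Ω : Type*} [MeasurableSpace Ω] {P : Measure Ω}

lemma hasLaw_sum_gaussianReal {ι : Type*} {X : ι → Ω → ℝ} {m : ι → ℝ} {v : ι → ℝ≥0}
    (hX : ∀ i, HasLaw (X i) (gaussianReal (m i) (v i)) P) (hind : iIndepFun X P) (s : Finset ι) :
    HasLaw (∑ i ∈ s, X i) (gaussianReal (∑ i ∈ s, m i) (∑ i ∈ s, v i)) P := by
  classical
  have := hind.isProbabilityMeasure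
  induction s using Finset.induction_on with
  | empty =>
    simp only [Finset.sum_empty, gaussianReal_zero_var]
    exact hasLaw_dirac_of_ae_eq .rfl
  | insert i s hi ih =>
    have hindep := (hind.indepFun_finsetSum_of_notMem₀ (fun i => (hX i).aemeasurable) hi).symm
    simp only [Finset.sum_insert hi]
    exact ⟨(hX i).aemeasurable.add ih.aemeasurable,
      gaussianReal_add_gaussianReal_of_indepFun hindep (hX i).map_eq ih.map_eq⟩

lemma hasLaw_sum_gaussianReal_pi {ι : Type*} [Fintype ι] {Ω : ι → Type*}
    [∀ i, MeasurableSpace (Ω i)] {μ : ∀ i, Measure (Ω i)} [∀ i, IsProbabilityMeasure (μ i)]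
    {X : ∀ i, Ω i → ℝ} {m : ι → ℝ} {v : ι → ℝ≥0}
    (hX : ∀ i, HasLaw (X i) (gaussianReal (m i) (v i)) (μ i)) (s : Finset ι) :
    HasLaw (fun ω => ∑ i ∈ s, X i (ω i)) (gaussianReal (∑ i ∈ s, m i) (∑ i ∈ s, v i))
      (Measure.pi μ) := by
  simpa [Finset.sum_fn] using hasLaw_sum_gaussianReal
    (fun i => (hX i).comp (measurePreserving_eval μ i).hasLaw)
    (iIndepFun_pi fun i => (hX i).aemeasurable) s

lemma gaussianPDFReal_mul_exp_mul_sq {v : ℝ≥0} (hv : v ≠ 0) (t x : ℝ) :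
    gaussianPDFReal 0 v x * Real.exp (t * x ^ 2) =
      (√(2 * Real.pi * v))⁻¹ * Real.exp (-((1 - 2 * t * v) / (2 * v)) * x ^ 2) := by
  rw [gaussianPDFReal, mul_assoc, ← Real.exp_add]
  congr 2
  field_simp
  ring

lemma integrable_exp_mul_sq_gaussianReal {t : ℝ} {v : ℝ≥0} (h : 2 * t * v < 1) :
    Integrable (fun x => Real.exp (t * x ^ 2)) (gaussianReal 0 v) := by
  rcases eq_or_ne v 0 with rfl | hv
  · rw [gaussianReal_zero_var]
    exact integrable_dirac (by simp)
  · have hpos : 0 < (1 - 2 * t * v) / (2 * v) := by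
      have : 0 < 1 - 2 * t * v := sub_pos.2 h
      positivity
    rw [gaussianReal_of_var_ne_zero 0 hv,
      integrable_withDensity_iff_integrable_smul' (measurable_gaussianPDF 0 v)
        (Filter.Eventually.of_forall fun _ => gaussianPDF_lt_top)]
    simp only [toReal_gaussianPDF, smul_eq_mul, gaussianPDFReal_mul_exp_mul_sq hv]
    exact (integrable_exp_neg_mul_sq hpos).const_mul _

lemma integral_exp_mul_sq_gaussianReal {t : ℝ} {v : ℝ≥0} (h : 2 * t * v < 1) :
    ∫ x, Real.exp (t * x ^ 2) ∂gaussianReal 0 v = (√(1 - 2 * t * v))⁻¹ := by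
  rcases eq_or_ne v 0 with rfl | hv
  · simp
  · have : 0 < 1 - 2 * t * v := sub_pos.2 h
    rw [integral_gaussianReal_eq_integral_smul hv]
    simp only [smul_eq_mul, gaussianPDFReal_mul_exp_mul_sq hv]
    rw [integral_const_mul, integral_gaussian, ← Real.sqrt_inv, ← Real.sqrt_inv,
      ← Real.sqrt_mul (by positivity)]
    congr 1
    field_simp

lemma two_mul_inv_four_mul_mul_le (v : ℝ) : 2 * (4 * v)⁻¹ * v ≤ 1 / 2 := by
  rcases eq_or_ne v 0 with rfl | hv
  · norm_num
  · field_simp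
    norm_num

lemma integrable_exp_sq_div_gaussianReal (v : ℝ≥0) :
    Integrable (fun x => Real.exp (x ^ 2 / (4 * v))) (gaussianReal 0 v) := by
  simp only [div_eq_inv_mul]
  exact integrable_exp_mul_sq_gaussianReal
    ((two_mul_inv_four_mul_mul_le v).trans_lt (by norm_num))

lemma integral_exp_sq_div_gaussianReal_le_two (v : ℝ≥0) :
    ∫ x, Real.exp (x ^ 2 / (4 * v)) ∂gaussianReal 0 v ≤ 2 := by
  have hv := two_mul_inv_four_mul_mul_le v
  simp only [div_eq_inv_mul]
  rw [integral_exp_mul_sq_gaussianReal (hv.trans_lt (by norm_num))]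
  refine inv_le_of_inv_le₀ two_pos (Real.le_sqrt_of_sq_le ?_)
  linarith

lemma integrable_of_integrable_exp {Y : Ω → ℝ} (hm : AEStronglyMeasurable Y P) (h0 : 0 ≤ Y)
    (hexp : Integrable (fun ω => Real.exp (Y ω)) P) : Integrable Y P :=
  hexp.mono' hm <| Filter.Eventually.of_forall fun ω => by
    rw [Real.norm_of_nonneg (h0 ω)]
    linarith [Real.add_one_le_exp (Y ω)]

variable [IsProbabilityMeasure P]

lemma integral_le_log_integral_exp {Y : Ω → ℝ} (hY : Integrable Y P)
    (hexp : Integrable (fun ω => Real.exp (Y ω)) P) :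
    ∫ ω, Y ω ∂P ≤ Real.log (∫ ω, Real.exp (Y ω) ∂P) :=
  (Real.le_log_iff_exp_le (integral_exp_pos hexp)).2 <|
    convexOn_exp.map_integral_le Real.continuous_exp.continuousOn isClosed_univ
      (Filter.Eventually.of_forall fun _ => Set.mem_univ _) hY hexp

lemma integral_le_of_integral_sq_le {X : Ω → ℝ} (hX : MemLp X 2 P) {τ : ℝ} (hτ : 0 ≤ τ)
    (h : ∫ ω, X ω ^ 2 ∂P ≤ τ ^ 2) : ∫ ω, X ω ∂P ≤ τ := by
  have hvar := variance_nonneg X P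
  rw [variance_eq_sub hX, sub_nonneg] at hvar
  exact le_of_sq_le_sq (hvar.trans h) hτ

end Gaussian

section RectDiscrepancy

open Finset

lemma ordConnected_filter_eq {α κ : Type*} [Preorder α] [PartialOrder κ] [DecidableEq κ] {φ : α → κ}
    (hφ : Monotone φ) {s : Finset α} (hs : (s : Set α).OrdConnected) (c : κ) :
    ((s.filter (φ · = c) : Finset α) : Set α).OrdConnected := by
  rw [coe_filter]
  exact hs.inter (Set.ordConnected_singleton.preimage_mono hφ)

variable {α β : Type*} [LinearOrder α] [LocallyFiniteOrder α] [LinearOrder β] [LocallyFiniteOrder β]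

/-- The rectangle discrepancy of an array: its largest absolute sum over a rectangle
`[a, a'] × [b, b']`, normalized by the square root of the area. Empty rectangles contribute
`0 / 0 = 0`. -/
def rectDiscrepancy (e : α → β → ℝ) : ℝ :=
  ⨆ p : (α × α) × β × β, |∑ i ∈ Icc p.1.1 p.1.2, ∑ j ∈ Icc p.2.1 p.2.2, e i j| /
    √((#(Icc p.1.1 p.1.2) : ℝ) * #(Icc p.2.1 p.2.2))

lemma rectDiscrepancy_nonneg (e : α → β → ℝ) : 0 ≤ rectDiscrepancy e :=
  Real.iSup_nonneg fun _ => by positivity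

lemma exists_eq_Icc_of_ordConnected {s : Finset α} (hne : s.Nonempty)
    (hs : (s : Set α).OrdConnected) : ∃ a b, s = Icc a b :=
  ⟨s.min' hne, s.max' hne, Subset.antisymm
    (fun x hx => mem_Icc.2 ⟨s.min'_le x hx, s.le_max' x hx⟩)
    fun _ hx => hs.out (s.min'_mem hne) (s.max'_mem hne) (mem_Icc.1 hx)⟩

lemma abs_sum_le_rectDiscrepancy_mul_sqrt [Finite α] [Finite β] (e : α → β → ℝ)
    {s : Finset α} {t : Finset β} (hs : (s : Set α).OrdConnected) (ht : (t : Set β).OrdConnected) :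
    |∑ i ∈ s, ∑ j ∈ t, e i j| ≤ rectDiscrepancy e * √((#s : ℝ) * #t) := by
  rcases s.eq_empty_or_nonempty with rfl | hsne
  · simp
  rcases t.eq_empty_or_nonempty with rfl | htne
  · simp
  have hpos : 0 < √((#s : ℝ) * #t) := by
    have := hsne.card_pos
    have := htne.card_pos
    positivity
  obtain ⟨a, a', rfl⟩ := exists_eq_Icc_of_ordConnected hsne hs
  obtain ⟨b, b', rfl⟩ := exists_eq_Icc_of_ordConnected htne ht
  rw [← div_le_iff₀ hpos]
  exact le_ciSup_of_le (Set.finite_range _).bddAbove ((a, a'), (b, b')) le_rfl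

lemma rectDiscrepancy_swap (e : α → β → ℝ) :
    rectDiscrepancy (fun j i => e i j) = rectDiscrepancy e :=
  (Equiv.prodComm _ _).iSup_congr fun p => by
    simp only [Equiv.prodComm_apply, Prod.fst_swap, Prod.snd_swap]
    rw [sum_comm, mul_comm]

lemma rectDiscrepancy_rev {m n : ℕ} (e : Fin m → Fin n → ℝ) :
    rectDiscrepancy (fun (i : Fin m) (j : Fin n) => e i.rev j.rev) = rectDiscrepancy e := by
  have hinv : ∀ k, Function.Involutive fun p : Fin k × Fin k => (p.2.rev, p.1.rev) :=
    fun _ _ => by simp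
  refine ((hinv m).toPerm.prodCongr (hinv n).toPerm).iSup_congr fun p => ?_
  simp only [Equiv.prodCongr_apply, Prod.map_fst, Prod.map_snd,
    Function.Involutive.coe_toPerm, ← Fin.map_revPerm_Icc, sum_map, card_map]
  rfl

lemma abs_sum_mul_comp_le [Finite α] [Finite β] {κ ι : Type*} [PartialOrder κ] [PartialOrder ι]
    [DecidableEq κ] [DecidableEq ι] (e : α → β → ℝ) (h : κ → ι → ℝ) {φ : α → κ} {ψ : β → ι}
    (hφ : Monotone φ) (hψ : Monotone ψ) {s : Finset α} {t : Finset β}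
    (hs : (s : Set α).OrdConnected) (ht : (t : Set β).OrdConnected) {P : Finset κ} {Q : Finset ι}
    (hP : ∀ i ∈ s, φ i ∈ P) (hQ : ∀ j ∈ t, ψ j ∈ Q) {p q : ℕ}
    (hp : ∀ c ∈ P, #{i ∈ s | φ i = c} ≤ p) (hq : ∀ d ∈ Q, #{j ∈ t | ψ j = d} ≤ q) :
    |∑ i ∈ s, ∑ j ∈ t, e i j * h (φ i) (ψ j)| ≤
      rectDiscrepancy e * √((p : ℝ) * q) * ∑ c ∈ P, ∑ d ∈ Q, |h c d| := by
  have hsplit : ∑ i ∈ s, ∑ j ∈ t, e i j * h (φ i) (ψ j) = ∑ c ∈ P, ∑ d ∈ Q,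
      (∑ i ∈ s with φ i = c, ∑ j ∈ t with ψ j = d, e i j) * h c d := by
    rw [← sum_fiberwise_of_maps_to hP]
    refine sum_congr rfl fun c _ => ?_
    simp only [sum_mul]
    rw [sum_comm (s := Q)]
    refine sum_congr rfl fun i hi => ?_
    rw [← sum_fiberwise_of_maps_to hQ (fun j => e i j * h (φ i) (ψ j))]
    refine sum_congr rfl fun d _ => sum_congr rfl fun j hj => ?_
    rw [(mem_filter.1 hi).2, (mem_filter.1 hj).2]
  have hblock : ∀ c ∈ P, ∀ d ∈ Q, |∑ i ∈ s with φ i = c, ∑ j ∈ t with ψ j = d, e i j| ≤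
      rectDiscrepancy e * √((p : ℝ) * q) := by
    intro c hc d hd
    refine (abs_sum_le_rectDiscrepancy_mul_sqrt e
      (ordConnected_filter_eq hφ hs c) (ordConnected_filter_eq hψ ht d)).trans ?_
    have := rectDiscrepancy_nonneg e
    gcongr
    · exact hp c hc
    · exact hq d hd
  rw [hsplit, mul_sum]
  refine (abs_sum_le_sum_abs _ _).trans (sum_le_sum fun c hc => ?_)
  rw [mul_sum]
  refine (abs_sum_le_sum_abs _ _).trans (sum_le_sum fun d hd => ?_)
  rw [abs_mul]
  exact mul_le_mul_of_nonneg_right (hblock c hc d hd) (abs_nonneg _)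

end RectDiscrepancy

section DyadicChaining

open Finset

variable {m n : ℕ}

/-- The `a`-th dyadic shell of `Fin n`: the indices whose 1-based position `i + 1` lies in
`[2 ^ a, 2 ^ (a + 1))`. -/
def dyadicShell (n a : ℕ) : Finset (Fin n) := {i | Nat.log 2 (i + 1) = a}

/-- Rounds a position `p` of the `a`-th dyadic shell down to a multiple of `2 ^ (a - k)`, so that
the shell is cut into `2 ^ k` blocks of constancy. -/
def coarsen (a k p : ℕ) : ℕ := p / 2 ^ (a - k) * 2 ^ (a - k)

/-- The pairing over a product of dyadic shells of `e` with the coarsening of `f` to `2 ^ k × 2 ^ l`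
blocks. The array `f` is indexed by 1-based positions. -/
def coarsePairing (e : Fin m → Fin n → ℝ) (f : ℕ → ℕ → ℝ) (a b k l : ℕ) : ℝ :=
  ∑ i ∈ dyadicShell m a, ∑ j ∈ dyadicShell n b,
    e i j * f (coarsen a k (i + 1)) (coarsen b l (j + 1))

lemma mem_dyadicShell {a : ℕ} {i : Fin n} :
    i ∈ dyadicShell n a ↔ 2 ^ a ≤ (i : ℕ) + 1 ∧ (i : ℕ) + 1 < 2 ^ (a + 1) := by
  simp [dyadicShell, Nat.log_eq_iff]

lemma ordConnected_dyadicShell (n a : ℕ) : (dyadicShell n a : Set (Fin n)).OrdConnected := by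
  refine ⟨fun i hi j hj k hk => ?_⟩
  rw [mem_coe, mem_dyadicShell] at *
  have hik : (i : ℕ) ≤ k := hk.1
  have hkj : (k : ℕ) ≤ j := hk.2
  omega

lemma monotone_succ_div (n d : ℕ) : Monotone fun i : Fin n => ((i : ℕ) + 1) / d :=
  fun _ _ h => Nat.div_le_div_right (Nat.succ_le_succ h)

lemma card_filter_succ_div_eq_le (s : Finset (Fin n)) {d : ℕ} (hd : 0 < d) (c : ℕ) :
    #(s.filter fun i : Fin n => ((i : ℕ) + 1) / d = c) ≤ d :=
  calc #(s.filter fun i : Fin n => ((i : ℕ) + 1) / d = c) ≤ #(Ico (c * d) ((c + 1) * d)) := by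
        refine card_le_card_of_injOn (fun i : Fin n => (i : ℕ) + 1) (fun i hi => ?_)
          fun i _ j _ hij => Fin.ext (Nat.succ_injective hij)
        have hic := (mem_filter.1 hi).2
        rw [Nat.div_eq_iff hd] at hic
        simp only [coe_Ico, Set.mem_Ico, add_mul]
        omega
    _ = d := by rw [Nat.card_Ico, add_mul]; omega

lemma succ_div_mem_Ico_of_mem_dyadicShell {a k : ℕ} (hk : k ≤ a) {i : Fin n}
    (hi : i ∈ dyadicShell n a) : ((i : ℕ) + 1) / 2 ^ (a - k) ∈ Ico (2 ^ k) (2 ^ (k + 1)) := by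
  rw [mem_dyadicShell] at hi
  rw [mem_Ico, Nat.le_div_iff_mul_le (by positivity), Nat.div_lt_iff_lt_mul (by positivity),
    ← pow_add, ← pow_add]
  convert hi using 3 <;> omega

lemma coarsen_self (a p : ℕ) : coarsen a a p = p := by simp [coarsen]

lemma sum_div_two_mul_two_sub_le {F : ℕ → ℝ} (hF : Antitone F) (hF0 : ∀ p, 0 ≤ F p) {B : ℝ}
    (hFB : ∀ p, F p ≤ B) (s : Finset ℕ) : ∑ c ∈ s, (F (c / 2 * 2) - F c) ≤ B := by
  obtain ⟨N, hN⟩ := s.exists_nat_subset_range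
  calc ∑ c ∈ s, (F (c / 2 * 2) - F c) ≤ ∑ c ∈ s, (F (c - 1) - F c) :=
        sum_le_sum fun c _ => sub_le_sub_right (hF (by omega)) _
    _ ≤ ∑ c ∈ range (N + 1), (F (c - 1) - F c) :=
        sum_le_sum_of_subset_of_nonneg (hN.trans (range_subset_range.2 N.le_succ))
          fun c _ _ => sub_nonneg.2 (hF (Nat.sub_le c 1))
    _ = F 0 - F N := by
        rw [sum_range_succ', Nat.zero_sub, sub_self, add_zero]
        exact sum_range_sub' F N
    _ ≤ B := by linarith [hF0 N, hFB 0]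

lemma coarsePairing_swap (e : Fin m → Fin n → ℝ) (f : ℕ → ℕ → ℝ) (a b k l : ℕ) :
    coarsePairing (fun j i => e i j) (fun q p => f p q) b a l k = coarsePairing e f a b k l :=
  sum_comm

lemma coarsen_eq_of_lt {a k : ℕ} (hk : k < a) (p : ℕ) :
    coarsen a k p = p / 2 ^ (a - (k + 1)) / 2 * 2 * 2 ^ (a - (k + 1)) := by
  rw [coarsen, show a - k = a - (k + 1) + 1 by omega, pow_succ, ← Nat.div_div_eq_div_mul]
  ring

variable (e : Fin m → Fin n → ℝ) {f : ℕ → ℕ → ℝ} {B : ℝ} {a b k l : ℕ}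

lemma abs_sum_mul_succ_div_le (h : ℕ → ℕ → ℝ) (hk : k ≤ a) (hl : l ≤ b) :
    |∑ i ∈ dyadicShell m a, ∑ j ∈ dyadicShell n b,
        e i j * h ((i + 1) / 2 ^ (a - k)) ((j + 1) / 2 ^ (b - l))| ≤
      rectDiscrepancy e * √(2 ^ (a - k) * 2 ^ (b - l)) *
        ∑ d ∈ Ico (2 ^ l) (2 ^ (l + 1)), ∑ c ∈ Ico (2 ^ k) (2 ^ (k + 1)), |h c d| := by
  rw [sum_comm (s := Ico (2 ^ l) _)]
  simpa using abs_sum_mul_comp_le e h (monotone_succ_div m _) (monotone_succ_div n _)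
    (ordConnected_dyadicShell m a) (ordConnected_dyadicShell n b)
    (fun _ hi => succ_div_mem_Ico_of_mem_dyadicShell hk hi)
    (fun _ hj => succ_div_mem_Ico_of_mem_dyadicShell hl hj)
    (fun c _ => card_filter_succ_div_eq_le _ (Nat.two_pow_pos _) c)
    (fun d _ => card_filter_succ_div_eq_le _ (Nat.two_pow_pos _) d)

lemma abs_coarsePairing_zero_zero_le (hf0 : ∀ p q, 0 ≤ f p q) (hfB : ∀ p q, f p q ≤ B) :
    |coarsePairing e f a b 0 0| ≤ rectDiscrepancy e * B * √(2 ^ (a + b)) :=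
  calc |coarsePairing e f a b 0 0|
      ≤ rectDiscrepancy e * √(2 ^ (a - 0) * 2 ^ (b - 0)) * ∑ d ∈ Ico (2 ^ 0) (2 ^ (0 + 1)),
          ∑ c ∈ Ico (2 ^ 0) (2 ^ (0 + 1)), |f (c * 2 ^ (a - 0)) (d * 2 ^ (b - 0))| :=
        abs_sum_mul_succ_div_le e (fun c d => f (c * 2 ^ (a - 0)) (d * 2 ^ (b - 0)))
          a.zero_le b.zero_le
    _ = rectDiscrepancy e * √(2 ^ (a + b)) * f (2 ^ a) (2 ^ b) := by
        simp [pow_add, abs_of_nonneg (hf0 _ _)]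
    _ ≤ rectDiscrepancy e * √(2 ^ (a + b)) * B :=
        mul_le_mul_of_nonneg_left (hfB _ _)
          (mul_nonneg (rectDiscrepancy_nonneg e) (Real.sqrt_nonneg _))
    _ = rectDiscrepancy e * B * √(2 ^ (a + b)) := by ring

lemma sqrt_two_pow_mul_two_pow_le (hk : k < a) (hl : l ≤ b) (hlk : l ≤ k + 1) :
    √(2 ^ (a - (k + 1)) * 2 ^ (b - l)) * 2 ^ l ≤ √(2 ^ (a + b)) := by
  refine Real.le_sqrt_of_sq_le ?_
  rw [mul_pow, Real.sq_sqrt (by positivity), ← pow_add, ← pow_mul, ← pow_add]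
  exact pow_le_pow_right₀ one_le_two (by omega)

lemma coarsePairing_succ_sub (hk : k < a) :
    coarsePairing e f a b (k + 1) l - coarsePairing e f a b k l =
      ∑ i ∈ dyadicShell m a, ∑ j ∈ dyadicShell n b, e i j *
        (f ((i + 1) / 2 ^ (a - (k + 1)) * 2 ^ (a - (k + 1))) ((j + 1) / 2 ^ (b - l) * 2 ^ (b - l)) -
          f ((i + 1) / 2 ^ (a - (k + 1)) / 2 * 2 * 2 ^ (a - (k + 1)))
            ((j + 1) / 2 ^ (b - l) * 2 ^ (b - l))) := by
  simp only [coarsePairing, coarsen_eq_of_lt hk, ← sum_sub_distrib, ← mul_sub]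
  rfl

lemma abs_coarsePairing_succ_sub_le (hf : Antitone f) (hf0 : ∀ p q, 0 ≤ f p q)
    (hfB : ∀ p q, f p q ≤ B) (hk : k < a) (hl : l ≤ b) (hlk : l ≤ k + 1) :
    |coarsePairing e f a b (k + 1) l - coarsePairing e f a b k l| ≤
      rectDiscrepancy e * B * √(2 ^ (a + b)) := by
  set x : ℕ := 2 ^ (a - (k + 1))
  set y : ℕ := 2 ^ (b - l)
  have hB : 0 ≤ B := (hf0 0 0).trans (hfB 0 0)
  have hR := rectDiscrepancy_nonneg e
  have hrow : ∀ d, ∑ c ∈ Ico (2 ^ (k + 1)) (2 ^ (k + 1 + 1)),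
      |f (c * x) (d * y) - f (c / 2 * 2 * x) (d * y)| ≤ B := fun d => by
    have hF : Antitone fun c => f (c * x) (d * y) := fun _ _ h => hf (Nat.mul_le_mul_right x h) _
    simp only [abs_of_nonpos (sub_nonpos.2 (hF (Nat.div_mul_le_self _ 2))), neg_sub]
    exact sum_div_two_mul_two_sub_le hF (fun _ => hf0 _ _) (fun _ => hfB _ _) _
  have hsum : ∑ d ∈ Ico (2 ^ l) (2 ^ (l + 1)), ∑ c ∈ Ico (2 ^ (k + 1)) (2 ^ (k + 1 + 1)),
      |f (c * x) (d * y) - f (c / 2 * 2 * x) (d * y)| ≤ 2 ^ l * B := by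
    refine (sum_le_card_nsmul _ _ B fun d _ => hrow d).trans_eq ?_
    rw [Nat.card_Ico, pow_succ, mul_two, Nat.add_sub_cancel, nsmul_eq_mul]
    norm_cast
  rw [coarsePairing_succ_sub e hk]
  refine (abs_sum_mul_succ_div_le e
    (fun c d => f (c * x) (d * y) - f (c / 2 * 2 * x) (d * y)) hk hl).trans ?_
  calc rectDiscrepancy e * √(2 ^ (a - (k + 1)) * 2 ^ (b - l)) * _
      ≤ rectDiscrepancy e * √(2 ^ (a - (k + 1)) * 2 ^ (b - l)) * (2 ^ l * B) := by gcongr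
    _ = rectDiscrepancy e * B * (√(2 ^ (a - (k + 1)) * 2 ^ (b - l)) * 2 ^ l) := by ring
    _ ≤ rectDiscrepancy e * B * √(2 ^ (a + b)) := by
        gcongr
        exact sqrt_two_pow_mul_two_pow_le hk hl hlk

lemma abs_coarsePairing_le (hf : Antitone f) (hf' : ∀ p, Antitone (f p))
    (hf0 : ∀ p q, 0 ≤ f p q) (hfB : ∀ p q, f p q ≤ B) (hk : k ≤ a) (hl : l ≤ b) :
    |coarsePairing e f a b k l| ≤
      (k + l + 1) * (rectDiscrepancy e * B * √(2 ^ (a + b))) := by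
  induction hs : k + l generalizing k l with
  | zero =>
    obtain ⟨rfl, rfl⟩ := add_eq_zero.1 hs
    simpa using abs_coarsePairing_zero_zero_le e hf0 hfB
  | succ s ih =>
    -- Always undo the finer axis: refining the rows to level `k + 1` is only affordable while the
    -- `2 ^ l` column blocks satisfy `l ≤ k + 1`, and symmetrically for the columns.
    rcases le_or_gt l k with hlk | hkl
    · obtain ⟨k, rfl⟩ : ∃ k', k = k' + 1 := ⟨k - 1, by omega⟩
      have hstep := abs_coarsePairing_succ_sub_le e hf hf0 hfB hk hl hlk
      have hprev := ih (k := k) (by omega) hl (by omega)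
      have htri := abs_sub_abs_le_abs_sub (coarsePairing e f a b (k + 1) l)
        (coarsePairing e f a b k l)
      push_cast
      linarith
    · obtain ⟨l, rfl⟩ : ∃ l', l = l' + 1 := ⟨l - 1, by omega⟩
      have hstep := abs_coarsePairing_succ_sub_le (fun j i => e i j) (f := fun q p => f p q)
        (fun _ _ h p => hf' p h) (fun q p => hf0 p q) (fun q p => hfB p q) hl hk (by omega)
      simp only [coarsePairing_swap, rectDiscrepancy_swap, add_comm b a] at hstep
      have hprev := ih hk (l := l) (by omega) (by omega)
      have htri := abs_sub_abs_le_abs_sub (coarsePairing e f a b k (l + 1))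
        (coarsePairing e f a b k l)
      push_cast
      linarith

end DyadicChaining

section MonotonePairing

open Finset

variable {m n : ℕ}

lemma frobSq_nonneg (u : Fin m → Fin n → ℝ) : 0 ≤ frobSq u :=
  sum_nonneg fun _ _ => sum_nonneg fun _ _ => sq_nonneg _

lemma exists_antitone_extension {g : Fin m → Fin n → ℝ} (hg : Antitone g)
    (hg' : ∀ i, Antitone (g i)) (hg0 : ∀ i j, 0 ≤ g i j) :
    ∃ f : ℕ → ℕ → ℝ, Antitone f ∧ (∀ p, Antitone (f p)) ∧ (∀ p q, 0 ≤ f p q) ∧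
      ∀ (i : Fin m) (j : Fin n), f (i + 1) (j + 1) = g i j := by
  set f : ℕ → ℕ → ℝ := fun p q =>
    if h : p - 1 < m ∧ q - 1 < n then g ⟨p - 1, h.1⟩ ⟨q - 1, h.2⟩ else 0 with hf
  have hf0 : ∀ p q, 0 ≤ f p q := fun p q => by
    simp only [hf]
    split_ifs
    exacts [hg0 _ _, le_rfl]
  have hanti : ∀ {p p' q q'}, p ≤ p' → q ≤ q' → f p' q' ≤ f p q := by
    intro p p' q q' hp hq
    by_cases h' : p' - 1 < m ∧ q' - 1 < n
    · have h : p - 1 < m ∧ q - 1 < n := by omega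
      simp only [hf, dif_pos h, dif_pos h']
      exact (hg (Fin.mk_le_mk.2 (Nat.sub_le_sub_right hp 1)) _).trans
        (hg' _ (Fin.mk_le_mk.2 (Nat.sub_le_sub_right hq 1)))
    · exact (dif_neg h').trans_le (hf0 p q)
  exact ⟨f, fun _ _ h _ => hanti h le_rfl, fun _ _ _ h => hanti le_rfl h, hf0,
    fun i j => by simp [hf]⟩

lemma sq_mul_le_frobSq {g : Fin m → Fin n → ℝ} (hg : Antitone g) (hg' : ∀ i, Antitone (g i))
    (hg0 : ∀ i j, 0 ≤ g i j) (i : Fin m) (j : Fin n) :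
    g i j ^ 2 * ((i + 1) * (j + 1)) ≤ frobSq g :=
  calc g i j ^ 2 * ((i + 1) * (j + 1)) = ∑ _i' ∈ Iic i, ∑ _j' ∈ Iic j, g i j ^ 2 := by
        simp only [sum_const, Fin.card_Iic, nsmul_eq_mul]
        push_cast
        ring
    _ ≤ ∑ i' ∈ Iic i, ∑ j' ∈ Iic j, g i' j' ^ 2 :=
        sum_le_sum fun i' hi => sum_le_sum fun j' hj => pow_le_pow_left₀ (hg0 i j)
          ((hg (mem_Iic.1 hi) j).trans (hg' i' (mem_Iic.1 hj))) 2
    _ ≤ ∑ i' ∈ Iic i, ∑ j', g i' j' ^ 2 :=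
        sum_le_sum fun _ _ => sum_le_univ_sum_of_nonneg fun _ => sq_nonneg _
    _ ≤ frobSq g :=
        sum_le_univ_sum_of_nonneg fun _ => sum_nonneg fun _ _ => sq_nonneg _

lemma le_sqrt_frobSq_div_of_mem_dyadicShell {g : Fin m → Fin n → ℝ} (hg : Antitone g)
    (hg' : ∀ i, Antitone (g i)) (hg0 : ∀ i j, 0 ≤ g i j) {a b : ℕ} {i : Fin m} {j : Fin n}
    (hi : i ∈ dyadicShell m a) (hj : j ∈ dyadicShell n b) :
    g i j ≤ √(frobSq g) / √(2 ^ (a + b)) := by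
  rw [le_div_iff₀ (by positivity)]
  refine Real.le_sqrt_of_sq_le ((le_trans ?_ (sq_mul_le_frobSq hg hg' hg0 i j)))
  have hia : (2 : ℝ) ^ a ≤ i + 1 := by exact_mod_cast (mem_dyadicShell.1 hi).1
  have hjb : (2 : ℝ) ^ b ≤ j + 1 := by exact_mod_cast (mem_dyadicShell.1 hj).1
  rw [mul_pow, Real.sq_sqrt (by positivity), pow_add]
  gcongr

lemma abs_sum_dyadicShell_mul_le (e : Fin m → Fin n → ℝ) {g : Fin m → Fin n → ℝ} (hg : Antitone g)
    (hg' : ∀ i, Antitone (g i)) (hg0 : ∀ i j, 0 ≤ g i j) (a b : ℕ) :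
    |∑ i ∈ dyadicShell m a, ∑ j ∈ dyadicShell n b, e i j * g i j| ≤
      (a + b + 1) * (rectDiscrepancy e * √(frobSq g)) := by
  obtain ⟨f, hf, hf', hf0, hfg⟩ := exists_antitone_extension hg hg' hg0
  set B := √(frobSq g) / √(2 ^ (a + b))
  have hBpow : B * √(2 ^ (a + b)) = √(frobSq g) := div_mul_cancel₀ _ (by positivity)
  -- The bound `B` on `g` is available on the shells only; truncation makes it global.
  have heq : coarsePairing e (fun p q => min (f p q) B) a b a b =
      ∑ i ∈ dyadicShell m a, ∑ j ∈ dyadicShell n b, e i j * g i j := by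
    refine sum_congr rfl fun i hi => sum_congr rfl fun j hj => ?_
    simp only [coarsen_self, hfg,
      min_eq_left (le_sqrt_frobSq_div_of_mem_dyadicShell hg hg' hg0 hi hj), B]
  have h := abs_coarsePairing_le e (a := a) (b := b) (f := fun p q => min (f p q) B) (B := B)
    (fun _ _ hp q => min_le_min_right B (hf hp q)) (fun p _ _ hq => min_le_min_right B (hf' p hq))
    (fun p q => le_min (hf0 p q) (by positivity)) (fun p q => min_le_right _ _) le_rfl le_rfl
  rwa [heq, mul_assoc, hBpow] at h

/-- The polylogarithmic loss of the chaining: the number of products of dyadic shells of an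
`m × n` array times the length of a chain in each. -/
def logFactor (m n : ℕ) : ℝ :=
  (Nat.log 2 m + 1) * (Nat.log 2 n + 1) * (Nat.log 2 m + Nat.log 2 n + 1)

lemma logFactor_nonneg (m n : ℕ) : 0 ≤ logFactor m n := by
  unfold logFactor
  positivity

lemma sum_eq_sum_dyadicShell {M : Type*} [AddCommMonoid M] (f : Fin n → M) :
    ∑ i, f i = ∑ a ∈ range (Nat.log 2 n + 1), ∑ i ∈ dyadicShell n a, f i :=
  (sum_fiberwise_of_maps_to
    (fun i _ => mem_range.2 (Nat.lt_succ_of_le (Nat.log_mono_right i.isLt))) f).symm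

lemma abs_sum_mul_le_of_antitone (e : Fin m → Fin n → ℝ) {g : Fin m → Fin n → ℝ} (hg : Antitone g)
    (hg' : ∀ i, Antitone (g i)) (hg0 : ∀ i j, 0 ≤ g i j) :
    |∑ i, ∑ j, e i j * g i j| ≤ logFactor m n * (rectDiscrepancy e * √(frobSq g)) := by
  set R := rectDiscrepancy e * √(frobSq g)
  have hR : 0 ≤ R := mul_nonneg (rectDiscrepancy_nonneg e) (Real.sqrt_nonneg _)
  have hsplit : ∑ i, ∑ j, e i j * g i j =
      ∑ a ∈ range (Nat.log 2 m + 1), ∑ b ∈ range (Nat.log 2 n + 1),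
        ∑ i ∈ dyadicShell m a, ∑ j ∈ dyadicShell n b, e i j * g i j := by
    simp only [sum_eq_sum_dyadicShell (n := n)]
    rw [sum_eq_sum_dyadicShell]
    exact sum_congr rfl fun a _ => sum_comm
  have hshell : ∀ a ∈ range (Nat.log 2 m + 1), ∀ b ∈ range (Nat.log 2 n + 1),
      |∑ i ∈ dyadicShell m a, ∑ j ∈ dyadicShell n b, e i j * g i j| ≤
        (Nat.log 2 m + Nat.log 2 n + 1) * R := by
    intro a ha b hb
    refine (abs_sum_dyadicShell_mul_le e hg hg' hg0 a b).trans ?_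
    gcongr
    · exact Nat.lt_succ_iff.1 (mem_range.1 ha)
    · exact Nat.lt_succ_iff.1 (mem_range.1 hb)
  rw [hsplit]
  calc _ ≤ ∑ _a ∈ range (Nat.log 2 m + 1), ∑ _b ∈ range (Nat.log 2 n + 1),
          (Nat.log 2 m + Nat.log 2 n + 1) * R :=
        (abs_sum_le_sum_abs _ _).trans <| sum_le_sum fun a ha =>
          (abs_sum_le_sum_abs _ _).trans <| sum_le_sum fun b hb => hshell a ha b hb
    _ = logFactor m n * R := by
        simp only [sum_const, card_range, nsmul_eq_mul, logFactor]
        push_cast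
        ring

lemma frobSq_le_frobSq {u v : Fin m → Fin n → ℝ} (h : ∀ i j, |u i j| ≤ |v i j|) :
    frobSq u ≤ frobSq v :=
  sum_le_sum fun i _ => sum_le_sum fun j _ => sq_le_sq.2 (h i j)

lemma sum_sum_rev (f : Fin m → Fin n → ℝ) :
    ∑ i, ∑ j, f (Fin.rev i) (Fin.rev j) = ∑ i, ∑ j, f i j :=
  Fintype.sum_equiv Fin.revPerm _ _ fun _ => Fintype.sum_equiv Fin.revPerm _ _ fun _ => rfl

lemma Isotonic.abs_sum_mul_le_of_nonneg (e : Fin m → Fin n → ℝ) {u : Fin m → Fin n → ℝ}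
    (hu : Isotonic u) (hu0 : ∀ i j, 0 ≤ u i j) :
    |∑ i, ∑ j, e i j * u i j| ≤ logFactor m n * (rectDiscrepancy e * √(frobSq u)) := by
  have h := abs_sum_mul_le_of_antitone (fun i j => e (Fin.rev i) (Fin.rev j))
    (g := fun i j => u (Fin.rev i) (Fin.rev j)) (fun _ _ hi _ => hu (Fin.rev_le_rev.2 hi) le_rfl)
    (fun _ _ _ hj => hu le_rfl (Fin.rev_le_rev.2 hj)) (fun _ _ => hu0 _ _)
  rwa [rectDiscrepancy_rev, sum_sum_rev fun i j => e i j * u i j, frobSq,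
    sum_sum_rev fun i j => u i j ^ 2, ← frobSq] at h

lemma Isotonic.abs_sum_mul_le (e : Fin m → Fin n → ℝ) {u : Fin m → Fin n → ℝ} (hu : Isotonic u) :
    |∑ i, ∑ j, e i j * u i j| ≤ 2 * logFactor m n * (rectDiscrepancy e * √(frobSq u)) := by
  have hR := rectDiscrepancy_nonneg e
  have hL := logFactor_nonneg m n
  have hpos : |∑ i, ∑ j, e i j * (u i j)⁺| ≤ logFactor m n * (rectDiscrepancy e * √(frobSq u)) := by
    refine (Isotonic.abs_sum_mul_le_of_nonneg e (u := fun i j => (u i j)⁺)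
      (fun _ _ _ _ hi hj => posPart_mono (hu hi hj)) fun _ _ => posPart_nonneg _).trans ?_
    gcongr
    exact frobSq_le_frobSq fun i j => (abs_of_nonneg (posPart_nonneg _)).trans_le
      (sup_le (le_abs_self _) (abs_nonneg _))
  have hneg : |∑ i, ∑ j, e i j * (u i j)⁻| ≤ logFactor m n * (rectDiscrepancy e * √(frobSq u)) := by
    refine (abs_sum_mul_le_of_antitone e (g := fun i j => (u i j)⁻)
      (fun _ _ hi _ => negPart_anti (hu hi le_rfl)) (fun _ _ _ hj => negPart_anti (hu le_rfl hj))
      fun _ _ => negPart_nonneg _).trans ?_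
    gcongr
    exact frobSq_le_frobSq fun i j => (abs_of_nonneg (negPart_nonneg _)).trans_le
      (sup_le (neg_le_abs _) (abs_nonneg _))
  calc |∑ i, ∑ j, e i j * u i j|
      = |∑ i, ∑ j, e i j * (u i j)⁺ - ∑ i, ∑ j, e i j * (u i j)⁻| := by
        simp only [← sum_sub_distrib, ← mul_sub, posPart_sub_negPart]
    _ ≤ 2 * logFactor m n * (rectDiscrepancy e * √(frobSq u)) := by
        linarith [abs_sub (∑ i, ∑ j, e i j * (u i j)⁺) (∑ i, ∑ j, e i j * (u i j)⁻)]

end MonotonePairing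

section NoiseDiscrepancy

open Finset

lemma exp_mul_rectDiscrepancy_sq_le {α β : Type*} [LinearOrder α] [LocallyFiniteOrder α]
    [LinearOrder β] [LocallyFiniteOrder β] [Fintype α] [Fintype β] [Nonempty α] [Nonempty β]
    (e : α → β → ℝ) (c : ℝ) :
    Real.exp (c * rectDiscrepancy e ^ 2) ≤ ∑ p : (α × α) × β × β,
      Real.exp (c * ((∑ i ∈ Icc p.1.1 p.1.2, ∑ j ∈ Icc p.2.1 p.2.2, e i j) ^ 2 /
        (#(Icc p.1.1 p.1.2) * #(Icc p.2.1 p.2.2)))) := by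
  obtain ⟨p, hp⟩ := exists_eq_ciSup_of_finite
    (f := fun p : (α × α) × β × β => |∑ i ∈ Icc p.1.1 p.1.2, ∑ j ∈ Icc p.2.1 p.2.2, e i j| /
      √((#(Icc p.1.1 p.1.2) : ℝ) * #(Icc p.2.1 p.2.2)))
  rw [rectDiscrepancy, ← hp, div_pow, sq_abs, Real.sq_sqrt (by positivity)]
  exact single_le_sum (f := fun p : (α × α) × β × β =>
    Real.exp (c * ((∑ i ∈ Icc p.1.1 p.1.2, ∑ j ∈ Icc p.2.1 p.2.2, e i j) ^ 2 /
      (#(Icc p.1.1 p.1.2) * #(Icc p.2.1 p.2.2))))) (fun _ _ => (Real.exp_pos _).le) (mem_univ p)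

variable {m n : ℕ}

lemma measurable_rectDiscrepancy :
    Measurable (rectDiscrepancy : (Fin m → Fin n → ℝ) → ℝ) :=
  Measurable.iSup fun _ => by fun_prop

lemma noiseMeasure_eq (m n : ℕ) (σ : ℝ) : noiseMeasure m n σ =
    Measure.pi fun _ => Measure.pi fun _ => gaussianReal 0 (σ ^ 2).toNNReal := by
  rw [Real.toNNReal_of_nonneg (sq_nonneg σ)]
  rfl

instance isProbabilityMeasure_noiseMeasure (σ : ℝ) :
    IsProbabilityMeasure (noiseMeasure m n σ) := by
  rw [noiseMeasure_eq]
  infer_instance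

lemma hasLaw_sum_noiseMeasure (σ : ℝ) (s : Finset (Fin m)) (t : Finset (Fin n)) :
    HasLaw (fun ε : Fin m → Fin n → ℝ => ∑ i ∈ s, ∑ j ∈ t, ε i j)
      (gaussianReal 0 (#s * #t * (σ ^ 2).toNNReal)) (noiseMeasure m n σ) := by
  have hentry : HasLaw id (gaussianReal 0 (σ ^ 2).toNNReal) (gaussianReal 0 (σ ^ 2).toNNReal) :=
    HasLaw.id
  have hrow := hasLaw_sum_gaussianReal_pi (fun _ : Fin n => hentry) t
  simpa [noiseMeasure_eq, mul_assoc] using hasLaw_sum_gaussianReal_pi (fun _ : Fin m => hrow) s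

lemma inv_four_mul_sq_mul_div (σ : ℝ) (a b : ℕ) (x : ℝ) :
    (4 * σ ^ 2)⁻¹ * (x ^ 2 / (a * b)) = x ^ 2 / (4 * (a * b * (σ ^ 2).toNNReal : NNReal)) := by
  push_cast [Real.coe_toNNReal _ (sq_nonneg σ)]
  ring

lemma integrable_exp_sum_sq_noiseMeasure (σ : ℝ) (s : Finset (Fin m)) (t : Finset (Fin n)) :
    Integrable (fun ε => Real.exp ((4 * σ ^ 2)⁻¹ * ((∑ i ∈ s, ∑ j ∈ t, ε i j) ^ 2 / (#s * #t))))
      (noiseMeasure m n σ) := by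
  have hlaw := hasLaw_sum_noiseMeasure σ s t
  simp only [inv_four_mul_sq_mul_div]
  exact (hlaw.map_eq ▸ integrable_exp_sq_div_gaussianReal _).comp_aemeasurable hlaw.aemeasurable

lemma integral_exp_sum_sq_noiseMeasure_le_two (σ : ℝ) (s : Finset (Fin m)) (t : Finset (Fin n)) :
    ∫ ε, Real.exp ((4 * σ ^ 2)⁻¹ * ((∑ i ∈ s, ∑ j ∈ t, ε i j) ^ 2 / (#s * #t)))
      ∂noiseMeasure m n σ ≤ 2 := by
  set v : NNReal := #s * #t * (σ ^ 2).toNNReal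
  have hlaw : HasLaw _ (gaussianReal 0 v) _ := hasLaw_sum_noiseMeasure σ s t
  simp only [inv_four_mul_sq_mul_div]
  exact (hlaw.integral_comp (f := fun x => Real.exp (x ^ 2 / (4 * v))) (by fun_prop)).trans_le
    (integral_exp_sq_div_gaussianReal_le_two v)

variable [NeZero m] [NeZero n]

lemma integrable_exp_rectDiscrepancy_sq (σ : ℝ) :
    Integrable (fun ε => Real.exp ((4 * σ ^ 2)⁻¹ * rectDiscrepancy ε ^ 2))
      (noiseMeasure m n σ) := by
  refine (integrable_finsetSum univ fun (p : (Fin m × Fin m) × Fin n × Fin n) _ =>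
    integrable_exp_sum_sq_noiseMeasure σ (Icc p.1.1 p.1.2) (Icc p.2.1 p.2.2)).mono'
      ((measurable_rectDiscrepancy.pow_const 2).const_mul _).exp.aestronglyMeasurable
      (Filter.Eventually.of_forall fun ε => ?_)
  rw [Real.norm_of_nonneg (Real.exp_pos _).le]
  exact exp_mul_rectDiscrepancy_sq_le ε _

lemma integral_exp_rectDiscrepancy_sq_le (σ : ℝ) :
    ∫ ε, Real.exp ((4 * σ ^ 2)⁻¹ * rectDiscrepancy ε ^ 2) ∂noiseMeasure m n σ ≤
      2 * ((m : ℝ) * n) ^ 2 := by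
  have hint := fun p : (Fin m × Fin m) × Fin n × Fin n =>
    integrable_exp_sum_sq_noiseMeasure σ (Icc p.1.1 p.1.2) (Icc p.2.1 p.2.2)
  calc _ ≤ ∫ ε, ∑ p : (Fin m × Fin m) × Fin n × Fin n, Real.exp ((4 * σ ^ 2)⁻¹ *
          ((∑ i ∈ Icc p.1.1 p.1.2, ∑ j ∈ Icc p.2.1 p.2.2, ε i j) ^ 2 /
            (#(Icc p.1.1 p.1.2) * #(Icc p.2.1 p.2.2)))) ∂noiseMeasure m n σ :=
        integral_mono (integrable_exp_rectDiscrepancy_sq σ)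
          (integrable_finsetSum univ fun p _ => hint p)
          fun ε => exp_mul_rectDiscrepancy_sq_le ε _
    _ ≤ ∑ _p : (Fin m × Fin m) × Fin n × Fin n, 2 := by
        rw [integral_finsetSum univ fun p _ => hint p]
        exact sum_le_sum fun p _ => integral_exp_sum_sq_noiseMeasure_le_two σ _ _
    _ = 2 * ((m : ℝ) * n) ^ 2 := by
        simp only [sum_const, card_univ, Fintype.card_prod, Fintype.card_fin, nsmul_eq_mul]
        push_cast
        ring

lemma integrable_rectDiscrepancy_sq {σ : ℝ} (hσ : σ ≠ 0) :
    Integrable (fun ε => rectDiscrepancy ε ^ 2) (noiseMeasure m n σ) := by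
  have hY := integrable_of_integrable_exp
    ((measurable_rectDiscrepancy.pow_const 2).const_mul _).aestronglyMeasurable
    (fun ε => by positivity) (integrable_exp_rectDiscrepancy_sq (m := m) (n := n) σ)
  rwa [integrable_const_mul_iff] at hY
  simp [hσ]

lemma integral_rectDiscrepancy_sq_le {σ : ℝ} (hσ : σ ≠ 0) :
    ∫ ε, rectDiscrepancy ε ^ 2 ∂noiseMeasure m n σ ≤
      4 * σ ^ 2 * Real.log (2 * ((m : ℝ) * n) ^ 2) := by
  have hY := (integrable_rectDiscrepancy_sq (m := m) (n := n) hσ).const_mul (4 * σ ^ 2)⁻¹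
  have hexp := integrable_exp_rectDiscrepancy_sq (m := m) (n := n) σ
  have hlog := (integral_le_log_integral_exp hY hexp).trans
    (Real.log_le_log (integral_exp_pos hexp) (integral_exp_rectDiscrepancy_sq_le σ))
  rwa [integral_const_mul, inv_mul_le_iff₀ (by positivity)] at hlog

end NoiseDiscrepancy

section LeastSquares

variable {m n : ℕ}

lemma Isotonic.sub_const {θ : Fin m → Fin n → ℝ} (hθ : Isotonic θ) (c : ℝ) :
    Isotonic fun i j => θ i j - c :=
  fun _ _ _ _ hi hj => sub_le_sub_right (hθ hi hj) c

lemma sqrt_frobSq_eq_norm (u : Fin m → Fin n → ℝ) :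
    √(frobSq u) = ‖WithLp.toLp 2 fun p : Fin m × Fin n => u p.1 p.2‖ := by
  simp [EuclideanSpace.norm_eq, frobSq, Fintype.sum_prod_type]

lemma sqrt_frobSq_add_le (u v : Fin m → Fin n → ℝ) :
    √(frobSq (u + v)) ≤ √(frobSq u) + √(frobSq v) := by
  simp only [sqrt_frobSq_eq_norm]
  exact norm_add_le (WithLp.toLp 2 fun p : Fin m × Fin n => u p.1 p.2)
    (WithLp.toLp 2 fun p : Fin m × Fin n => v p.1 p.2)

variable {lse : (Fin m → Fin n → ℝ) → Fin m → Fin n → ℝ} {θ : Fin m → Fin n → ℝ}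

lemma IsLSE.frobSq_sub_le (hlse : IsLSE lse) (hθ : Isotonic θ) (ε : Fin m → Fin n → ℝ) (c : ℝ) :
    frobSq (lse (θ + ε) - θ) ≤
      2 * ∑ i, ∑ j, ε i j * (lse (θ + ε) i j - c) - 2 * ∑ i, ∑ j, ε i j * (θ i j - c) := by
  have hmin := (hlse (θ + ε)).2 θ hθ
  have hexpand : frobSq (θ + ε - lse (θ + ε)) - frobSq (θ + ε - θ) =
      frobSq (lse (θ + ε) - θ) - (2 * ∑ i, ∑ j, ε i j * (lse (θ + ε) i j - c) -
        2 * ∑ i, ∑ j, ε i j * (θ i j - c)) := by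
    simp only [frobSq, Finset.mul_sum, ← Finset.sum_sub_distrib, Pi.sub_apply, Pi.add_apply]
    exact Finset.sum_congr rfl fun i _ => Finset.sum_congr rfl fun j _ => by ring
  linarith

lemma IsLSE.frobSq_sub_le_rectDiscrepancy (hlse : IsLSE lse) (hθ : Isotonic θ)
    (ε : Fin m → Fin n → ℝ) (c : ℝ) :
    frobSq (lse (θ + ε) - θ) ≤ 4 * (2 * logFactor m n) ^ 2 * rectDiscrepancy ε ^ 2 +
      8 * (2 * logFactor m n) * √(frobSq fun i j => θ i j - c) * rectDiscrepancy ε := by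
  set K := 2 * logFactor m n
  set Z := rectDiscrepancy ε
  set D := √(frobSq (lse (θ + ε) - θ))
  set V := √(frobSq fun i j => θ i j - c)
  have hK : 0 ≤ K := mul_nonneg zero_le_two (logFactor_nonneg m n)
  have hZ : 0 ≤ Z := rectDiscrepancy_nonneg ε
  have hD : D ^ 2 = frobSq (lse (θ + ε) - θ) := Real.sq_sqrt (frobSq_nonneg _)
  have htriangle : √(frobSq fun i j => lse (θ + ε) i j - c) ≤ D + V := by
    convert sqrt_frobSq_add_le (lse (θ + ε) - θ) (fun i j => θ i j - c) using 4
    ext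
    simp
  have hestimate : ∑ i, ∑ j, ε i j * (lse (θ + ε) i j - c) ≤ K * (Z * (D + V)) :=
    (le_abs_self _).trans <| (((hlse (θ + ε)).1.sub_const c).abs_sum_mul_le ε).trans (by gcongr)
  have htruth : -(K * (Z * V)) ≤ ∑ i, ∑ j, ε i j * (θ i j - c) :=
    neg_le_of_abs_le ((hθ.sub_const c).abs_sum_mul_le ε)
  have hbasic : D ^ 2 ≤ 2 * (K * Z) * D + 4 * (K * Z) * V := by
    linarith [hlse.frobSq_sub_le hθ ε c]
  rw [← hD]
  nlinarith [sq_nonneg (D - 2 * (K * Z))]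

end LeastSquares

section Risk

variable {m n : ℕ}

lemma natLog_two_le (n : ℕ) : (Nat.log 2 n : ℝ) ≤ 3 / 2 * Real.log n := by
  have hlogb := Real.natLog_le_logb n 2
  rw [Real.logb, Nat.cast_ofNat, le_div_iff₀ (Real.log_pos one_lt_two)] at hlogb
  nlinarith [Real.log_two_gt_d9, (Nat.log 2 n).cast_nonneg (α := ℝ)]

lemma logFactor_le (h : 1 ≤ Real.log (m * n)) :
    logFactor m n ≤ 16 * Real.log (m * n) ^ 3 := by
  have hm : (m : ℝ) ≠ 0 := by rintro hm; norm_num [hm] at h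
  have hn : (n : ℝ) ≠ 0 := by rintro hn; norm_num [hn] at h
  have hlog := Real.log_mul hm hn
  have hlm := Real.log_natCast_nonneg m
  have hln := Real.log_natCast_nonneg n
  have hm' := natLog_two_le m
  have hn' := natLog_two_le n
  set l := Real.log (m * n)
  calc logFactor m n ≤ (5 / 2 * l) * (5 / 2 * l) * (5 / 2 * l) := by
        unfold logFactor
        gcongr <;> linarith
    _ ≤ 16 * l ^ 3 := by nlinarith [pow_nonneg (zero_le_one.trans h) 3]

lemma four_mul_sq_mul_log_le (σ : ℝ) {x : ℝ} (h : 1 ≤ Real.log x) :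
    4 * σ ^ 2 * Real.log (2 * x ^ 2) ≤ (4 * σ * Real.log x) ^ 2 := by
  have hx : x ≠ 0 := by rintro rfl; norm_num at h
  rw [Real.log_mul two_ne_zero (pow_ne_zero 2 hx), Real.log_pow]
  push_cast
  have hlog : Real.log 2 + 2 * Real.log x ≤ 4 * Real.log x ^ 2 := by
    nlinarith [Real.log_two_lt_d9]
  nlinarith [sq_nonneg σ]

lemma one_le_log_mul (hm : 1 < m) (hn : 1 < n) : 1 ≤ Real.log (m * n) := by
  have hmn : (2 : ℝ) ^ 2 ≤ m * n := by
    exact_mod_cast (sq 2).trans_le (Nat.mul_le_mul hm hn)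
  have := Real.log_le_log (by norm_num) hmn
  rw [Real.log_pow] at this
  push_cast at this
  linarith [Real.log_two_gt_d9]

lemma sqrt_sq_mul_matVar_div (θ : Fin m → Fin n → ℝ) {σ : ℝ} (hσ : 0 ≤ σ) :
    √(σ ^ 2 * matVar θ / (m * n)) =
      σ * √(frobSq fun i j => θ i j - (∑ i, ∑ j, θ i j) / (m * n)) / (m * n) := by
  rw [matVar, ← frobSq, mul_div_assoc, div_div, ← sq, Real.sqrt_mul (sq_nonneg σ),
    Real.sqrt_sq hσ, Real.sqrt_div (frobSq_nonneg _), Real.sqrt_sq (by positivity), mul_div_assoc]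

variable [NeZero m] [NeZero n]
variable {lse : (Fin m → Fin n → ℝ) → Fin m → Fin n → ℝ} {θ : Fin m → Fin n → ℝ} {σ τ : ℝ}

lemma IsLSE.integral_frobSq_sub_le (hlse : IsLSE lse) (hθ : Isotonic θ) (hσ : σ ≠ 0) (hτ : 0 ≤ τ)
    (hZ : ∫ ε : Fin m → Fin n → ℝ, rectDiscrepancy ε ^ 2 ∂noiseMeasure m n σ ≤ τ ^ 2) (c : ℝ) :
    ∫ ε, frobSq (lse (θ + ε) - θ) ∂noiseMeasure m n σ ≤
      4 * (2 * logFactor m n * τ) ^ 2 +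
        8 * (2 * logFactor m n * τ) * √(frobSq fun i j => θ i j - c) := by
  set K := 2 * logFactor m n
  set V := √(frobSq fun i j => θ i j - c)
  have hK : 0 ≤ K := mul_nonneg zero_le_two (logFactor_nonneg m n)
  have hsq := integrable_rectDiscrepancy_sq (m := m) (n := n) hσ
  have hL2 : MemLp (rectDiscrepancy : (Fin m → Fin n → ℝ) → ℝ) 2 (noiseMeasure m n σ) :=
    (memLp_two_iff_integrable_sq measurable_rectDiscrepancy.aestronglyMeasurable).2 hsq
  have hint := hL2.integrable one_le_two
  calc ∫ ε, frobSq (lse (θ + ε) - θ) ∂noiseMeasure m n σ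
      ≤ ∫ ε, (4 * K ^ 2 * rectDiscrepancy ε ^ 2 + 8 * K * V * rectDiscrepancy ε)
          ∂noiseMeasure m n σ :=
        integral_mono_of_nonneg (.of_forall fun _ => frobSq_nonneg _)
          ((hsq.const_mul _).add (hint.const_mul _))
          (.of_forall fun ε => hlse.frobSq_sub_le_rectDiscrepancy hθ ε c)
    _ = 4 * K ^ 2 * ∫ ε : Fin m → Fin n → ℝ, rectDiscrepancy ε ^ 2 ∂noiseMeasure m n σ +
          8 * K * V * ∫ ε : Fin m → Fin n → ℝ, rectDiscrepancy ε ∂noiseMeasure m n σ := by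
        rw [integral_add (hsq.const_mul _) (hint.const_mul _), integral_const_mul,
          integral_const_mul]
    _ ≤ 4 * K ^ 2 * τ ^ 2 + 8 * K * V * τ := by
        gcongr
        exact integral_le_of_integral_sq_le hL2 hτ hZ
    _ = 4 * (K * τ) ^ 2 + 8 * (K * τ) * V := by ring

lemma IsLSE.integral_frobSq_sub_le_log (hlse : IsLSE lse) (hθ : Isotonic θ) (hσ : 0 < σ)
    (h : 1 ≤ Real.log (m * n)) (c : ℝ) :
    ∫ ε, frobSq (lse (θ + ε) - θ) ∂noiseMeasure m n σ ≤
      4 * 128 ^ 2 * (σ ^ 2 * Real.log (m * n) ^ 8 +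
        σ * √(frobSq fun i j => θ i j - c) * Real.log (m * n) ^ 4) := by
  have hF := logFactor_le h
  have hZ := (integral_rectDiscrepancy_sq_le (m := m) (n := n) hσ.ne').trans
    (four_mul_sq_mul_log_le σ h)
  set l := Real.log (m * n)
  set V := √(frobSq fun i j => θ i j - c)
  have hF0 := logFactor_nonneg m n
  have hKτ : 2 * logFactor m n * (4 * σ * l) ≤ 128 * (σ * l ^ 4) := by
    calc 2 * logFactor m n * (4 * σ * l) ≤ 2 * (16 * l ^ 3) * (4 * σ * l) := by gcongr
      _ = 128 * (σ * l ^ 4) := by ring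
  calc _ ≤ 4 * (2 * logFactor m n * (4 * σ * l)) ^ 2 +
          8 * (2 * logFactor m n * (4 * σ * l)) * V :=
        hlse.integral_frobSq_sub_le hθ hσ.ne' (by positivity) hZ c
    _ ≤ 4 * (128 * (σ * l ^ 4)) ^ 2 + 8 * (128 * (σ * l ^ 4)) * V := by gcongr
    _ ≤ 4 * 128 ^ 2 * (σ ^ 2 * l ^ 8 + σ * V * l ^ 4) := by
        have : 0 ≤ σ * V * l ^ 4 := by positivity
        linarith

end Risk

/-- **Theorem 1 (worst case risk bound).** There is a universal constant `C > 0` such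
that for all `n1, n2 > 1`, all `σ > 0` and every isotonic `θ*`, the least squares
estimator satisfies
`R(θ*, θ̂) ≤ C (σ² (log n)⁸ / n + sqrt(σ² V(θ*) / n) (log n)⁴)` with `n = n1 n2`. -/
theorem isotonic_lse_worst_case_risk :
    ∃ C : ℝ, 0 < C ∧
      ∀ (n1 n2 : ℕ), 1 < n1 → 1 < n2 → ∀ σ : ℝ, 0 < σ →
        ∀ θstar : Fin n1 → Fin n2 → ℝ, Isotonic θstar →
          ∀ lse, IsLSE lse →
            risk σ θstar lse ≤
              C * (σ ^ 2 * Real.log (n1 * n2) ^ 8 / (n1 * n2) +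
                Real.sqrt (σ ^ 2 * matVar θstar / (n1 * n2)) * Real.log (n1 * n2) ^ 4) := by
  refine ⟨4 * 128 ^ 2, by norm_num, fun n1 n2 h1 h2 σ hσ θstar hθ lse hlse => ?_⟩
  have : NeZero n1 := ⟨by omega⟩
  have : NeZero n2 := ⟨by omega⟩
  have hloss := hlse.integral_frobSq_sub_le_log hθ hσ (one_le_log_mul h1 h2)
    ((∑ i, ∑ j, θstar i j) / (n1 * n2))
  have hn : (0 : ℝ) < n1 * n2 := by positivity
  rw [sqrt_sq_mul_matVar_div θstar hσ.le, risk, div_le_iff₀ hn]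
  refine hloss.trans_eq ?_
  field_simp
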